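/- arXiv:2204.07033 — 12 statements merged into one kernel-verified Lean document; each statement's English description precedes it below -/
import Mathlib

section
/- The set T = {(x, sin(1/x)) : 0 < x ≤ 1} ∪ {(0, y) : -1 ≤ y < 0}, viewed as a topological subspace of ℝ², is a locally compact topological space (every point of T has a compact neighborhood in T). -/
open Real Set

/-- The deleted topologist's sine curve `T`. -/
def T : Set (ℝ × ℝ) :=
  {p : ℝ × ℝ | (0 < p.1 ∧ p.1 ≤ 1 ∧ p.2 = Real.sin (1 / p.1)) ∨
    (p.1 = 0 ∧ -1 ≤ p.2 ∧ p.2 < 0)}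

theorem continuous_aux : Continuous (fun x : ℝ => x * Real.sin (1 / x)) := by
  rw [continuous_iff_continuousAt]
  intro x
  by_cases hx : x = 0
  · subst hx
    unfold ContinuousAt
    simp only [zero_mul]
    apply squeeze_zero_norm (a := fun x : ℝ => |x|)
    · intro t
      rw [Real.norm_eq_abs, abs_mul]
      exact mul_le_of_le_one_right (abs_nonneg _) (Real.abs_sin_le_one _)
    · simpa using (continuous_abs (G := ℝ)).tendsto 0
  · exact continuousAt_id.mul
      (Real.continuous_sin.continuousAt.comp (continuousAt_const.div continuousAt_id hx))

theorem locallyClosed_T : IsLocallyClosed T := by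
  refine ⟨{p : ℝ × ℝ | 0 < p.1 ∨ p.2 < 0},
    {p : ℝ × ℝ | 0 ≤ p.1 ∧ p.1 ≤ 1 ∧ -1 ≤ p.2 ∧ p.1 * p.2 = p.1 * Real.sin (1 / p.1)}, ?_, ?_, ?_⟩
  · exact (isOpen_lt continuous_const continuous_fst).union
      (isOpen_lt continuous_snd continuous_const)
  · exact (isClosed_le continuous_const continuous_fst).inter
      ((isClosed_le continuous_fst continuous_const).inter
      ((isClosed_le continuous_const continuous_snd).inter
      (isClosed_eq (continuous_fst.mul continuous_snd) (continuous_aux.comp continuous_fst))))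
  · ext ⟨x, y⟩
    simp only [T, mem_setOf_eq, mem_inter_iff]
    constructor
    · rintro (⟨h0, h1, rfl⟩ | ⟨rfl, h1, h2⟩)
      · exact ⟨Or.inl h0, h0.le, h1, Real.neg_one_le_sin _, rfl⟩
      · exact ⟨Or.inr h2, le_rfl, zero_le_one, h1, by simp⟩
    · rintro ⟨h, h0, h1, h2, h3⟩
      rcases h0.eq_or_lt with h4 | h4
      · right
        exact ⟨h4.symm, h2, h.resolve_left (by simp [← h4])⟩
      · left
        exact ⟨h4, h1, mul_left_cancel₀ h4.ne' h3⟩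

/-- `T`, with the subspace topology from `ℝ²`, is locally compact:
every point of `T` has a compact neighborhood in `T`. -/
theorem stmt_1 : ∀ x : T, ∃ K : Set T, IsCompact K ∧ K ∈ nhds x := by
  intro x
  have := locallyClosed_T.locallyCompactSpace
  exact exists_compact_mem_nhds x
end

section
/- The points r = (0, -1) and s = (1, sin 1) of T lie in different path components of T; that is, there is no continuous path γ : [0,1] → T with γ(0) = r and γ(1) = s. -/
open Real Set

def r : ℝ × ℝ := (0, -1)

noncomputable def s : ℝ × ℝ := (1, Real.sin 1)

/-- The points `r = (0,-1)` and `s = (1, sin 1)` lie in different path components of `T`: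
there is no continuous path in `T` from `r` to `s`. -/
theorem stmt_3 : ¬ JoinedIn T r s := by
  rintro ⟨γ, hγ⟩
  let f : ℝ → ℝ × ℝ := fun t => γ.extend t
  have hf : Continuous f := γ.continuous_extend
  have hT : ∀ t, f t ∈ T := fun t => hγ _
  have h0 : f 0 = r := γ.extend_zero
  have h1 : f 1 = s := γ.extend_one
  have hx : Continuous fun t => (f t).1 := continuous_fst.comp hf
  have hy : Continuous fun t => (f t).2 := continuous_snd.comp hf
  have hclosed : IsClosed {t | (f t).1 = 0} := isClosed_eq hx continuous_const
  have hopen : IsOpen {t | (f t).1 = 0} := by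
    rw [Metric.isOpen_iff]
    intro t ht
    have ht0 : (f t).1 = 0 := ht
    have hyt : (f t).2 < 0 := by
      rcases hT t with h | h
      · exact absurd ht0 h.1.ne'
      · exact h.2.2
    obtain ⟨ε, hε, hb⟩ := Metric.isOpen_iff.1 (isOpen_lt hy continuous_const) t hyt
    refine ⟨ε, hε, fun u hu => ?_⟩
    by_contra hne
    have hup : 0 < (f u).1 := by
      rcases hT u with h | h
      · exact h.1
      · exact absurd h.1 hne
    have hconn : IsPreconnected (Metric.ball t ε) := (convex_ball t ε).isPreconnected
    have hsub := hconn.intermediate_value (Metric.mem_ball_self hε) hu hx.continuousOn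
    obtain ⟨n, hn⟩ := exists_nat_gt (1 / (f u).1)
    have hpi := Real.pi_gt_three
    have hn0 : (0 : ℝ) ≤ n := n.cast_nonneg
    have hc : (n : ℝ) < π / 2 + n * (2 * π) := by nlinarith
    have hcpos : 0 < π / 2 + n * (2 * π) := by linarith
    have hlt : 1 / (π / 2 + n * (2 * π)) < (f u).1 := by
      rw [one_div_lt hcpos hup]
      linarith
    obtain ⟨v, hv, hve⟩ := hsub ⟨by rw [ht0]; positivity, hlt.le⟩
    have hve' : (f v).1 = 1 / (π / 2 + n * (2 * π)) := hve
    have hvneg : (f v).2 < 0 := hb hv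
    rcases hT v with h | h
    · have h2 := h.2.2
      rw [hve', one_div_one_div, Real.sin_add_nat_mul_two_pi, Real.sin_pi_div_two] at h2
      linarith
    · have : 0 < (f v).1 := by rw [hve']; positivity
      exact this.ne' h.1
  have huniv := IsClopen.eq_univ ⟨hclosed, hopen⟩ ⟨0, by simp [h0, r]⟩
  have : (1 : ℝ) ∈ {t | (f t).1 = 0} := huniv ▸ mem_univ _
  simp [h1, s] at this
end

section
/- The space T is not locally connected: the point r = (0, -1) of T has a neighborhood in T that contains no connected neighborhood of r. -/
open Real Set

lemma r_mem_T : r ∈ T := Or.inr ⟨rfl, le_refl _, by norm_num [r]⟩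

lemma sin_low (n : ℕ) : Real.sin (3 * π / 2 + n * (2 * π)) = -1 := by
  rw [Real.sin_add_nat_mul_two_pi, show 3 * π / 2 = π / 2 + π by ring, Real.sin_add_pi,
    Real.sin_pi_div_two]

lemma sin_high (n : ℕ) : Real.sin (π / 2 + (n + 1 : ℕ) * (2 * π)) = 1 := by
  rw [Real.sin_add_nat_mul_two_pi, Real.sin_pi_div_two]

lemma low_ge (n : ℕ) : 1 ≤ 3 * π / 2 + n * (2 * π) := by
  have h1 := Real.pi_gt_three
  have h2 : 0 ≤ (n : ℝ) * (2 * π) := by positivity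
  linarith

lemma seq_mem (n : ℕ) : ((1 / (3 * π / 2 + n * (2 * π)), -1) : ℝ × ℝ) ∈ T := by
  have h := low_ge n
  refine Or.inl ⟨by positivity, ?_, ?_⟩
  · exact (div_le_one (by linarith)).2 h
  · simp only [one_div_one_div]
    exact (sin_low n).symm

/-- `T` is not locally connected at `r = (0,-1)`: some neighborhood of `r` in `T`
contains no connected neighborhood of `r`. -/
theorem stmt_4 : ∃ U ∈ nhds (⟨r, r_mem_T⟩ : T),
    ¬ ∃ W ∈ nhds (⟨r, r_mem_T⟩ : T), W ⊆ U ∧ IsConnected W := by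
  refine ⟨{p : T | p.1.2 < 0}, ?_, ?_⟩
  · refine IsOpen.mem_nhds (isOpen_lt (by fun_prop) continuous_const) ?_
    norm_num [r]
  rintro ⟨W, hW, hWU, hc⟩
  have hs : Filter.Tendsto (fun n : ℕ => (⟨_, seq_mem n⟩ : T)) Filter.atTop
      (nhds ⟨r, r_mem_T⟩) := by
    rw [tendsto_subtype_rng]
    refine Filter.Tendsto.prodMk_nhds ?_ tendsto_const_nhds
    simp only [one_div]
    refine Filter.Tendsto.inv_tendsto_atTop ?_
    refine Filter.tendsto_atTop_add_const_left _ _ ?_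
    exact tendsto_natCast_atTop_atTop.atTop_mul_const (by positivity)
  obtain ⟨n, hn⟩ := (hs.eventually hW).exists
  have hp : IsPreconnected ((fun p : T => p.1.1) '' W) :=
    hc.isPreconnected.image _ (by fun_prop)
  have h0 : (0 : ℝ) ∈ (fun p : T => p.1.1) '' W := ⟨_, mem_of_mem_nhds hW, rfl⟩
  have h1 : 1 / (3 * π / 2 + n * (2 * π)) ∈ (fun p : T => p.1.1) '' W := ⟨_, hn, rfl⟩
  have hl := low_ge n
  have hpi := Real.pi_pos
  have hm : 0 < π / 2 + (n + 1 : ℕ) * (2 * π) := by positivity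
  obtain ⟨⟨q, hq⟩, hqW, hqe⟩ := hp.Icc_subset h0 h1
    (show 1 / (π / 2 + (n + 1 : ℕ) * (2 * π)) ∈ _ from ⟨by positivity, by
      apply one_div_le_one_div_of_le (by linarith)
      push_cast
      linarith⟩)
  have hneg : q.2 < 0 := hWU hqW
  have hqe' : q.1 = 1 / (π / 2 + (n + 1 : ℕ) * (2 * π)) := hqe
  have hqpos : 0 < q.1 := by rw [hqe']; positivity
  rcases hq with ⟨-, -, h⟩ | ⟨h, -⟩
  · rw [hqe', one_div_one_div, sin_high] at h
    linarith
  · linarith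
end

section
/- For every integer i ≥ 1, the vertical segment S = {(0, y) : -1 ≤ y < 0} is a connected component of the space V_i (i.e., S is exactly the connected component of the point r = (0,-1) in V_i). -/
open Real Set

def V : Set (ℝ × ℝ) := T ∩ {p : ℝ × ℝ | p.2 < 0}

def Vi (i : ℕ) : Set (ℝ × ℝ) := V ∪ (T ∩ {p : ℝ × ℝ | p.1 > 1 / (i : ℝ)})

lemma r_mem_Vi (i : ℕ) : r ∈ Vi i := Or.inl ⟨r_mem_T, by norm_num [r]⟩

lemma s_mem_T : s ∈ T := Or.inl ⟨one_pos, le_refl _, by norm_num [s]⟩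

lemma s_mem_Vi {i : ℕ} (hi : 2 ≤ i) : s ∈ Vi i := by
  refine Or.inr ⟨s_mem_T, ?_⟩
  have h2 : (1 : ℝ) < i := by exact_mod_cast lt_of_lt_of_le one_lt_two (by exact_mod_cast hi)
  show (1 : ℝ) / (i : ℝ) < s.1
  rw [show s.1 = 1 from rfl, div_lt_one (by linarith)]
  exact h2

lemma Vi_mono {i j : ℕ} (hi : 1 ≤ i) (hij : i ≤ j) : Vi i ⊆ Vi j := by
  apply Set.union_subset_union_right
  apply Set.inter_subset_inter_right
  intro p hp
  have hi' : (0 : ℝ) < i := by exact_mod_cast hi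
  have hij' : (i : ℝ) ≤ j := by exact_mod_cast hij
  exact lt_of_le_of_lt (one_div_le_one_div_of_le hi' hij') hp

/-- For every `i ≥ 1`, the segment `S = {(0,y) : -1 ≤ y < 0}` is exactly the connected
component of `r = (0,-1)` in the space `Vi i`. -/
theorem stmt_5 : ∀ i : ℕ, 1 ≤ i →
    connectedComponentIn (Vi i) r =
      {p : ℝ × ℝ | p.1 = 0 ∧ -1 ≤ p.2 ∧ p.2 < 0} := by
  intro i hi
  have hi' : (0 : ℝ) < i := by exact_mod_cast hi
  apply Set.Subset.antisymm
  · intro p hp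
    have hsub := connectedComponentIn_subset (Vi i) r
    have hpT : p ∈ T := by
      rcases hsub hp with h | h
      · exact h.1
      · exact h.1
    rcases hpT with ⟨ha, -, -⟩ | h
    swap
    · exact h
    exfalso
    obtain ⟨n, hn⟩ := exists_nat_gt ((i : ℝ) + 1 / p.1)
    have hpos : 0 < 1 / p.1 := by positivity
    have hpi := Real.pi_gt_three
    have hn0 : (0 : ℝ) ≤ n := Nat.cast_nonneg n
    have hyn : (n : ℝ) < π / 2 + n * (2 * π) := by nlinarith
    obtain ⟨y, hy⟩ : ∃ y : ℝ, y = π / 2 + n * (2 * π) := ⟨_, rfl⟩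
    rw [← hy] at hyn
    have hy0 : 0 < y := by linarith
    have hsin : Real.sin y = 1 := by
      rw [hy, Real.sin_add_nat_mul_two_pi, Real.sin_pi_div_two]
    have hxa : 1 / y ≤ p.1 := by
      rw [div_le_iff₀ hy0]
      have : 1 / p.1 < y := by linarith
      rw [div_lt_iff₀ ha] at this
      linarith
    have hxi : 1 / y ≤ 1 / (i : ℝ) := one_div_le_one_div_of_le hi' (by linarith)
    have hpre : IsPreconnected (Prod.fst '' connectedComponentIn (Vi i) r) :=
      isPreconnected_connectedComponentIn.image _ continuous_fst.continuousOn
    have hmem := hpre.ordConnected.out ⟨r, mem_connectedComponentIn (r_mem_Vi i), rfl⟩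
      ⟨p, hp, rfl⟩ (show 1 / y ∈ Set.Icc r.1 p.1 from ⟨by simp only [r]; positivity, hxa⟩)
    obtain ⟨q, hq, hqx⟩ := hmem
    have hx0 : 0 < 1 / y := by positivity
    rcases hsub hq with ⟨hT, h2⟩ | ⟨-, h1⟩
    · have h2' : q.2 < 0 := h2
      rcases hT with ⟨-, -, h⟩ | ⟨h, -⟩
      · rw [hqx, one_div_one_div, hsin] at h
        linarith
      · linarith
    · have h1' : 1 / (i : ℝ) < q.1 := h1
      linarith
  · have hS : {p : ℝ × ℝ | p.1 = 0 ∧ -1 ≤ p.2 ∧ p.2 < 0} = ({0} : Set ℝ) ×ˢ Set.Ico (-1 : ℝ) 0 := by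
      ext p
      simp
    apply IsPreconnected.subset_connectedComponentIn
    · rw [hS]
      exact isPreconnected_singleton.prod isPreconnected_Ico
    · exact ⟨rfl, le_refl _, by norm_num [r]⟩
    · intro p hp
      exact Or.inl ⟨Or.inr hp, hp.2.2⟩
end

section
/- For every integer i ≥ 1, every type G, and every locally constant function f : V_i → G, there exists ε > 0 such that f(z) = f(r) for every point z ∈ V_i whose first coordinate is less than ε. -/
open Real Set

lemma path_eq {i : ℕ} {G : Type*} {f : Vi i → G} (hf : IsLocallyConstant f) (g : ℝ → ℝ × ℝ)
    (a b : ℝ) (hg : ContinuousOn g (uIcc a b)) (hm : ∀ t ∈ uIcc a b, g t ∈ Vi i) :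
    f ⟨g a, hm a left_mem_uIcc⟩ = f ⟨g b, hm b right_mem_uIcc⟩ := by
  let h : uIcc a b → Vi i := fun t => ⟨g t, hm t t.2⟩
  have hc : Continuous h := by
    apply Continuous.subtype_mk
    exact continuousOn_iff_continuous_restrict.1 hg
  have hl : IsLocallyConstant (f ∘ h) := hf.comp_continuous hc
  haveI : PreconnectedSpace (uIcc a b) := Subtype.preconnectedSpace isPreconnected_uIcc
  exact hl.apply_eq_of_isPreconnected isPreconnected_univ
    (x := ⟨a, left_mem_uIcc⟩) (y := ⟨b, right_mem_uIcc⟩) trivial trivial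

/-- For every `i ≥ 1`, every type `G` and every locally constant `f : Vi i → G`, there is
`ε > 0` with `f z = f r` for every `z ∈ Vi i` whose first coordinate is less than `ε`. -/
theorem stmt_7 : ∀ i : ℕ, 1 ≤ i → ∀ (G : Type*) (f : Vi i → G), IsLocallyConstant f →
    ∃ ε > (0 : ℝ), ∀ z : Vi i, (z : ℝ × ℝ).1 < ε → f z = f ⟨r, r_mem_Vi i⟩ := by
  intro i hi G f hf
  obtain ⟨δ, hδ, H⟩ : ∃ δ > (0 : ℝ), ∀ z : Vi i, dist z ⟨r, r_mem_Vi i⟩ < δ →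
      f z = f ⟨r, r_mem_Vi i⟩ := by
    have := hf.eventually_eq ⟨r, r_mem_Vi i⟩
    obtain ⟨δ, hδ, H⟩ := Metric.eventually_nhds_iff.1 this
    exact ⟨δ, hδ, fun z hz => H hz⟩
  have hi0 : (0 : ℝ) < i := by exact_mod_cast hi
  have hpi := Real.pi_pos
  have hd : 0 < 1 / δ := by positivity
  have hM : 0 < 1 / δ + π + i + 1 := by positivity
  refine ⟨1 / (1 / δ + π + i + 1), by positivity, ?_⟩
  rintro ⟨⟨x, y⟩, hz⟩ hx
  simp only at hx
  have hT : (x, y) ∈ T := by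
    rcases hz with h | h
    · exact h.1
    · exact h.1
  rcases hT with ⟨hx0, hx1, hy⟩ | ⟨hx0, hy1, hy0⟩
  · simp only at hx0 hx1 hy
    have hu : 1 / δ + π + i + 1 < 1 / x := by
      rw [lt_div_iff₀ hM] at hx
      rw [lt_div_iff₀ hx0]
      linarith
    have hyneg : y < 0 := by
      rcases hz with h | h
      · exact h.2
      · exfalso
        have h2 : 1 / (i : ℝ) < x := h.2
        rw [div_lt_iff₀ hi0] at h2
        rw [lt_div_iff₀ hx0] at hu
        nlinarith [mul_pos hx0 hd, mul_pos hx0 hpi]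
    obtain ⟨u, hux⟩ : ∃ u, u = 1 / x := ⟨_, rfl⟩
    have hxu : x = 1 / u := by rw [hux]; simp
    rw [← hux] at hu hy
    obtain ⟨k, hk1, hk2⟩ : ∃ k : ℤ, -π < u - k * (2 * π) ∧ u - k * (2 * π) ≤ π := by
      obtain ⟨k, hk, -⟩ := existsUnique_sub_zsmul_mem_Ioc (by positivity : 0 < 2 * π) u (-π)
      refine ⟨k, ?_⟩
      simp only [zsmul_eq_mul, mem_Ioc] at hk
      exact ⟨hk.1, by linarith [hk.2]⟩
    have hk3 : u - k * (2 * π) < 0 := by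
      by_contra hcon
      have := Real.sin_nonneg_of_nonneg_of_le_pi (not_lt.1 hcon) hk2
      rw [Real.sin_sub_int_mul_two_pi] at this
      linarith
    obtain ⟨u0, hu0⟩ : ∃ u0, u0 = k * (2 * π) - π / 2 := ⟨_, rfl⟩
    have hsin0 : Real.sin u0 = -1 := by
      rw [← Real.sin_sub_int_mul_two_pi u0 k, hu0,
        show (k * (2 * π) - π / 2 - k * (2 * π) : ℝ) = -(π / 2) by ring]
      simp
    have hbig : ∀ t ∈ uIcc u u0, 1 / δ + 1 < t := by
      intro t ht
      have := ht.1
      rcases min_choice u u0 with h | h <;> rw [h] at this <;> linarith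
    have hm : ∀ t ∈ uIcc u u0, (1 / t, Real.sin t) ∈ Vi i := by
      intro t ht
      have h1 := hbig t ht
      have h0 : 0 < t := by linarith
      refine Or.inl ⟨Or.inl ⟨by positivity, ?_, by simp⟩, ?_⟩
      · show 1 / t ≤ 1
        rw [div_le_one h0]; linarith
      · show Real.sin t < 0
        rw [← Real.sin_sub_int_mul_two_pi t k]
        have h2 := ht.1
        have h3 := ht.2
        apply Real.sin_neg_of_neg_of_neg_pi_lt
        · rcases max_choice u u0 with h | h <;> rw [h] at h3 <;> linarith
        · rcases min_choice u u0 with h | h <;> rw [h] at h2 <;> linarith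
    have key := path_eq hf (fun t => (1 / t, Real.sin t)) u u0 (by
      apply ContinuousOn.prodMk
      · apply ContinuousOn.div continuousOn_const continuousOn_id
        intro t ht
        have := hbig t ht
        simp only [id]
        linarith
      · exact Real.continuous_sin.continuousOn) hm
    have e : (⟨(x, y), hz⟩ : Vi i) = ⟨(1 / u, Real.sin u), hm u left_mem_uIcc⟩ := by
      apply Subtype.ext
      simp only [hxu, hy]
    rw [e]
    refine key.trans (H _ ?_)
    have h1 := hbig u0 right_mem_uIcc
    have h0 : 0 < u0 := by linarith
    rw [Subtype.dist_eq]
    simp only [r, hsin0, Prod.dist_eq, dist_self, Real.dist_eq, sub_zero]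
    rw [abs_of_pos (by positivity)]
    refine max_lt ?_ hδ
    rw [one_div_lt h0 hδ]
    linarith
  · simp only at hx0 hy1 hy0
    subst hx0
    exact path_eq hf (fun t => ((0 : ℝ), t)) y (-1) (by fun_prop) (by
      intro t ht
      rw [uIcc_of_ge hy1] at ht
      have : t < 0 := lt_of_le_of_lt ht.2 hy0
      exact Or.inl ⟨Or.inr ⟨rfl, ht.1, this⟩, this⟩)
end

section
/- Let p be a prime. For every integer i ≥ 1, the set of locally constant functions from V_i to ZMod p (the field with p elements, as a discrete space) is countable. -/
open Real Set

lemma aux_conn {i : ℕ} {Z : Type*} (f : LocallyConstant (Vi i) Z) (S : Set (ℝ × ℝ))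
    (hS : IsPreconnected S) (hSV : S ⊆ Vi i) (x y : Vi i) (hx : x.1 ∈ S) (hy : y.1 ∈ S) :
    f x = f y := by
  have h : IsPreconnected ((Subtype.val : Vi i → ℝ × ℝ) ⁻¹' S) := by
    rw [← Topology.IsInducing.subtypeVal.isPreconnected_image, Subtype.image_preimage_coe,
      Set.inter_eq_right.mpr hSV]
    exact hS
  exact f.isLocallyConstant.apply_eq_of_isPreconnected h hx hy

lemma aux_curve {i : ℕ} {Z : Type*} (f : LocallyConstant (Vi i) Z) (a b : ℝ)
    (h : ∀ t ∈ Set.uIcc a b, 0 < t ∧ ((1 / t, Real.sin t) : ℝ × ℝ) ∈ Vi i) (x y : Vi i)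
    (hx : x.1 = (1 / a, Real.sin a)) (hy : y.1 = (1 / b, Real.sin b)) : f x = f y := by
  apply aux_conn f ((fun t : ℝ => ((1 / t, Real.sin t) : ℝ × ℝ)) '' Set.uIcc a b) ?_ ?_ x y
    ⟨a, Set.left_mem_uIcc, hx.symm⟩ ⟨b, Set.right_mem_uIcc, hy.symm⟩
  · apply isPreconnected_uIcc.image
    apply ContinuousOn.prodMk
    · exact continuousOn_const.div continuousOn_id (fun t ht => (h t ht).1.ne')
    · exact Real.continuous_sin.continuousOn
  · rintro _ ⟨t, ht, rfl⟩
    exact (h t ht).2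

lemma aux_neg (k : ℕ) (t : ℝ) (h1 : π + 2 * π * k < t) (h2 : t < 2 * π + 2 * π * k) :
    Real.sin t < 0 := by
  have h : Real.sin t = - Real.sin (t - 2 * π * k - π) := by
    rw [Real.sin_sub_pi, neg_neg, show t - 2 * π * k = t - k * (2 * π) by ring,
      Real.sin_sub_nat_mul_two_pi]
  rw [h, neg_lt_zero]
  apply Real.sin_pos_of_pos_of_lt_pi <;> linarith

lemma aux_ex (t : ℝ) (h0 : 0 ≤ t) (h : Real.sin t < 0) :
    ∃ k : ℕ, π + 2 * π * k < t ∧ t < 2 * π + 2 * π * k := by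
  have hpi := Real.pi_pos
  refine ⟨⌊t / (2 * π)⌋₊, ?_, ?_⟩
  · have h1 := Nat.floor_le (a := t / (2 * π)) (by positivity)
    set k := ⌊t / (2 * π)⌋₊
    rw [le_div_iff₀ (by positivity)] at h1
    by_contra! hc
    have : 0 ≤ Real.sin (t - k * (2 * π)) :=
      Real.sin_nonneg_of_nonneg_of_le_pi (by linarith) (by linarith)
    rw [Real.sin_sub_nat_mul_two_pi] at this
    linarith
  · have h1 := Nat.lt_floor_add_one (t / (2 * π))
    rw [div_lt_iff₀ (by positivity)] at h1
    linarith

lemma aux_mem (i : ℕ) (t : ℝ) (h1 : 1 ≤ t) (h : Real.sin t < 0) :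
    ((1 / t, Real.sin t) : ℝ × ℝ) ∈ Vi i := by
  refine Or.inl ⟨Or.inl ⟨by positivity, ?_, by simp⟩, h⟩
  exact (div_le_one (by linarith)).2 h1

/-- Parameter of the bottom of the `k`-th negative arc. -/
noncomputable def tk (k : ℕ) : ℝ := π + 2 * π * k + π / 2

lemma tk_lo (k : ℕ) : π + 2 * π * k < tk k := by unfold tk; linarith [Real.pi_pos]
lemma tk_hi (k : ℕ) : tk k < 2 * π + 2 * π * k := by unfold tk; linarith [Real.pi_pos]
lemma one_le_of (k : ℕ) (t : ℝ) (h : π + 2 * π * k < t) : 1 ≤ t := by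
  have := Real.pi_gt_three
  have : 0 ≤ 2 * π * (k : ℝ) := by positivity
  linarith

lemma sin_tk (k : ℕ) : Real.sin (tk k) = -1 := by
  rw [show tk k = (π / 2 + π) + k * (2 * π) by unfold tk; ring, Real.sin_add_nat_mul_two_pi,
    Real.sin_add_pi, Real.sin_pi_div_two]

noncomputable def qk (i k : ℕ) : Vi i :=
  ⟨(1 / tk k, Real.sin (tk k)), aux_mem i _ (one_le_of k _ (tk_lo k))
    (aux_neg k _ (tk_lo k) (tk_hi k))⟩

lemma aux_tendsto (i : ℕ) :
    Filter.Tendsto (qk i) Filter.atTop (nhds ⟨r, r_mem_Vi i⟩) := by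
  rw [tendsto_subtype_rng]
  show Filter.Tendsto (fun k => ((1 / tk k, Real.sin (tk k)) : ℝ × ℝ)) Filter.atTop
    (nhds ((0 : ℝ), (-1 : ℝ)))
  simp only [sin_tk, one_div]
  refine Filter.Tendsto.prodMk_nhds ?_ tendsto_const_nhds
  apply Filter.Tendsto.inv_tendsto_atTop
  apply Filter.tendsto_atTop_mono (f := fun k : ℕ => (k : ℝ)) _ tendsto_natCast_atTop_atTop
  intro k
  have := Real.pi_gt_three
  have h : (0 : ℝ) ≤ k := by positivity
  unfold tk
  nlinarith

lemma aux_cases (i : ℕ) (x : Vi i) {Z : Type*} :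
    (∀ f : LocallyConstant (Vi i) Z, f x = f ⟨r, r_mem_Vi i⟩) ∨
    (∃ k, ∀ f : LocallyConstant (Vi i) Z, f x = f (qk i k)) ∨
    (∃ h : s ∈ Vi i, ∀ f : LocallyConstant (Vi i) Z, f x = f ⟨s, h⟩) := by
  obtain ⟨⟨x, y⟩, hx⟩ := x
  have hT : (x, y) ∈ T := by
    rcases hx with h | h
    · exact h.1
    · exact h.1
  rcases hT with ⟨h0, h1, h2⟩ | ⟨h0, h1, h2⟩
  · right
    simp only at h0 h1 h2
    have ht1 : 1 ≤ 1 / x := (one_le_div h0).2 h1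
    by_cases hy : y < 0
    · left
      obtain ⟨k, hk1, hk2⟩ := aux_ex (1 / x) (by positivity) (h2 ▸ hy)
      refine ⟨k, fun f => aux_curve f (1 / x) (tk k) ?_ _ _ (by simp [h2]) rfl⟩
      intro t ht
      have hlo : π + 2 * π * k < t := lt_of_lt_of_le (lt_min hk1 (tk_lo k)) ht.1
      have hhi : t < 2 * π + 2 * π * k := lt_of_le_of_lt ht.2 (max_lt hk2 (tk_hi k))
      have h1t := one_le_of k t hlo
      exact ⟨by linarith, aux_mem i t h1t (aux_neg k t hlo hhi)⟩
    · right
      have hxi : 1 / (i : ℝ) < x := by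
        rcases hx with h | h
        · exact absurd h.2 hy
        · exact h.2
      have key : ∀ t ∈ Set.uIcc (1 / x) 1, 0 < t ∧ ((1 / t, Real.sin t) : ℝ × ℝ) ∈ Vi i := by
        intro t ht
        rw [Set.uIcc_of_ge ht1] at ht
        have ht0 : 0 < t := by linarith [ht.1]
        refine ⟨ht0, Or.inr ⟨Or.inl ⟨by positivity, (div_le_one ht0).2 ht.1, by simp⟩, ?_⟩⟩
        show 1 / (i : ℝ) < 1 / t
        refine lt_of_lt_of_le hxi ?_
        rw [le_one_div h0 ht0]
        exact ht.2
      have hs : s ∈ Vi i := by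
        have := (key 1 Set.right_mem_uIcc).2
        simpa [s] using this
      exact ⟨hs, fun f => aux_curve f (1 / x) 1 key _ _ (by simp [h2]) (by simp [s])⟩
  · left
    intro f
    simp only at h0 h1 h2
    subst h0
    apply aux_conn f (({0} : Set ℝ) ×ˢ Set.Ico (-1 : ℝ) 0)
      (isPreconnected_singleton.prod isPreconnected_Ico)
    · rintro ⟨a, b⟩ ⟨ha, hb⟩
      exact Or.inl ⟨Or.inr ⟨ha, hb.1, hb.2⟩, hb.2⟩
    · exact ⟨rfl, h1, h2⟩
    · exact ⟨rfl, by simp [r]⟩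

/-- For a prime `p` and every `i ≥ 1`, the locally constant functions `Vi i → ZMod p`
form a countable set. -/
theorem stmt_8 (p : ℕ) (hp : p.Prime) : ∀ i : ℕ, 1 ≤ i →
    Countable (LocallyConstant (Vi i) (ZMod p)) := by
  intro i _
  classical
  haveI : NeZero p := ⟨hp.ne_zero⟩
  have hN : ∀ f : LocallyConstant (Vi i) (ZMod p), ∃ N : ℕ, ∀ k ≥ N,
      f (qk i k) = f ⟨r, r_mem_Vi i⟩ := fun f =>
    Filter.eventually_atTop.1 ((aux_tendsto i).eventually
      (f.isLocallyConstant.eventually_eq ⟨r, r_mem_Vi i⟩))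
  choose N hN using hN
  let F : LocallyConstant (Vi i) (ZMod p) → ℕ × List (ZMod p) × ZMod p × ZMod p := fun f =>
    (N f, (List.range (N f)).map (fun k => f (qk i k)), f ⟨r, r_mem_Vi i⟩,
      if h : s ∈ Vi i then f ⟨s, h⟩ else 0)
  apply Function.Injective.countable (f := F)
  intro f g hfg
  simp only [F, Prod.mk.injEq] at hfg
  obtain ⟨e1, e2, e3, e4⟩ := hfg
  rw [← e1, List.map_inj_left] at e2
  ext x
  rcases aux_cases i x (Z := ZMod p) with h | ⟨k, h⟩ | ⟨hs, h⟩
  · rw [h f, h g, e3]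
  · rw [h f, h g]
    by_cases hk : k < N f
    · exact e2 k (List.mem_range.2 hk)
    · rw [hN f k (by omega), hN g k (by omega), e3]
  · rw [h f, h g]
    simpa [hs] using e4
end

section
/- For every integer i ≥ 1, the set of connected components of the space V_i is countably infinite. -/
open Real Set

lemma mk_eq_of_preconn {A S : Set (ℝ × ℝ)} (hS : IsPreconnected S) (hSA : S ⊆ A)
    {a b : ℝ × ℝ} (ha : a ∈ S) (hb : b ∈ S) :
    (ConnectedComponents.mk (⟨a, hSA ha⟩ : A)) = ConnectedComponents.mk (⟨b, hSA hb⟩ : A) := by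
  have h : IsPreconnected ((Subtype.val : A → ℝ × ℝ) ⁻¹' S) := by
    rw [← Topology.IsInducing.subtypeVal.isPreconnected_image, Subtype.image_preimage_coe,
      inter_eq_right.2 hSA]
    exact hS
  rw [ConnectedComponents.coe_eq_coe']
  exact h.subset_connectedComponent hb ha

lemma Vi_countable (i : ℕ) : Countable (ConnectedComponents (Vi i)) := by
  rw [← Set.countable_univ_iff]
  refine Set.Countable.mono (s₂ := insert (ConnectedComponents.mk (⟨r, r_mem_Vi i⟩ : Vi i))
    (range (fun q : {q : ℚ // ((q : ℝ), Real.sin (1 / (q : ℝ))) ∈ Vi i} =>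
      ConnectedComponents.mk (⟨_, q.2⟩ : Vi i)))) ?_ ((countable_range _).insert _)
  intro c _
  obtain ⟨⟨⟨x, y⟩, hp⟩, rfl⟩ := ConnectedComponents.surjective_coe c
  have hT : (x, y) ∈ T := by
    rcases hp with h | h
    · exact h.1
    · exact h.1
  rcases hT with ⟨hx0, hx1, hy⟩ | ⟨hx, hy1, hy2⟩
  · right
    simp only at hx0 hx1 hy
    subst hy
    have hW : ∀ᶠ t in nhds x, 0 < t ∧ (Real.sin (1 / t) < 0 ∨ t > 1 / (i : ℝ)) := by
      refine (lt_mem_nhds hx0).and ?_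
      have hc : ContinuousAt (fun t : ℝ => Real.sin (1 / t)) x := by
        have : x ≠ 0 := hx0.ne'
        fun_prop (disch := assumption)
      rcases hp with h | h
      · have h2 : Real.sin (1 / x) < 0 := h.2
        filter_upwards [hc.eventually_lt_const h2] with t ht using Or.inl ht
      · have h2 : 1 / (i : ℝ) < x := h.2
        filter_upwards [lt_mem_nhds h2] with t ht using Or.inr ht
    obtain ⟨l, hl, hsub⟩ := exists_Ioc_subset_of_mem_nhds hW ⟨x - 1, by linarith⟩
    obtain ⟨q, hq1, hq2⟩ := exists_rat_btwn hl
    have hsubI : ∀ t ∈ Icc (q : ℝ) x, 0 < t ∧ (Real.sin (1 / t) < 0 ∨ t > 1 / (i : ℝ)) :=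
      fun t ht => hsub ⟨lt_of_lt_of_le hq1 ht.1, ht.2⟩
    have hS : IsPreconnected ((fun t : ℝ => (t, Real.sin (1 / t))) '' Icc (q : ℝ) x) := by
      refine isPreconnected_Icc.image _ ?_
      intro t ht
      have : t ≠ 0 := (hsubI t ht).1.ne'
      apply ContinuousAt.continuousWithinAt
      fun_prop (disch := assumption)
    have hSA : ((fun t : ℝ => (t, Real.sin (1 / t))) '' Icc (q : ℝ) x) ⊆ Vi i := by
      rintro _ ⟨t, ht, rfl⟩
      obtain ⟨h0, h⟩ := hsubI t ht
      have hT : (t, Real.sin (1 / t)) ∈ T := Or.inl ⟨h0, ht.2.trans hx1, rfl⟩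
      rcases h with h | h
      · exact Or.inl ⟨hT, h⟩
      · exact Or.inr ⟨hT, h⟩
    have hqm := mem_image_of_mem (fun t : ℝ => (t, Real.sin (1 / t))) (left_mem_Icc.2 hq2.le)
    have hxm := mem_image_of_mem (fun t : ℝ => (t, Real.sin (1 / t))) (right_mem_Icc.2 hq2.le)
    exact ⟨⟨q, hSA hqm⟩, mk_eq_of_preconn hS hSA hqm hxm⟩
  · left
    simp only at hx hy1 hy2
    subst hx
    have hS : IsPreconnected ((fun t : ℝ => ((0 : ℝ), t)) '' Ico (-1) 0) :=
      isPreconnected_Ico.image _ (by fun_prop)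
    have hSA : ((fun t : ℝ => ((0 : ℝ), t)) '' Ico (-1) 0) ⊆ Vi i := by
      rintro _ ⟨t, ht, rfl⟩
      exact Or.inl ⟨Or.inr ⟨rfl, ht.1, ht.2⟩, ht.2⟩
    exact mk_eq_of_preconn hS hSA ⟨y, ⟨hy1, hy2⟩, rfl⟩ ⟨-1, ⟨le_refl _, by norm_num⟩, rfl⟩

lemma low_mem (i n : ℕ) : (1 / (3 * π / 2 + n * (2 * π)), (-1 : ℝ)) ∈ Vi i := by
  have hpi := Real.pi_gt_three
  have hn : (0 : ℝ) ≤ n * (2 * π) := by positivity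
  refine Or.inl ⟨Or.inl ⟨by positivity, ?_, ?_⟩, ?_⟩
  · show 1 / (3 * π / 2 + n * (2 * π)) ≤ 1
    rw [div_le_one (by positivity)]
    linarith
  · show (-1 : ℝ) = Real.sin (1 / (1 / (3 * π / 2 + n * (2 * π))))
    rw [one_div_one_div, sin_low]
  · show (-1 : ℝ) < 0
    norm_num

lemma low_ne (i n m : ℕ) (hi : 1 ≤ i) (hm : i ≤ m) (hnm : n < m) :
    ConnectedComponents.mk (⟨_, low_mem i m⟩ : Vi i) ≠ ConnectedComponents.mk ⟨_, low_mem i n⟩ := by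
  intro h
  have hpi := Real.pi_gt_three
  have hi' : (1 : ℝ) ≤ i := by exact_mod_cast hi
  have hm' : (i : ℝ) ≤ m := by exact_mod_cast hm
  have hnm' : (n : ℝ) + 1 ≤ m := by exact_mod_cast hnm
  have hn0 : (0 : ℝ) ≤ n := by positivity
  rw [ConnectedComponents.coe_eq_coe'] at h
  have hpre : IsPreconnected ((fun p : Vi i => p.1.1) ''
      connectedComponent (⟨_, low_mem i n⟩ : Vi i)) :=
    isPreconnected_connectedComponent.image _ (by fun_prop)
  have hc := hpre.ordConnected.out (mem_image_of_mem _ h) (mem_image_of_mem _ mem_connectedComponent)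
  have hcm : 1 / (π / 2 + m * (2 * π)) ∈ Icc (1 / (3 * π / 2 + m * (2 * π)))
      (1 / (3 * π / 2 + n * (2 * π))) := by
    constructor
    · apply one_div_le_one_div_of_le (by positivity)
      linarith
    · apply one_div_le_one_div_of_le (by positivity)
      nlinarith
  obtain ⟨⟨⟨x, y⟩, hp⟩, -, hx⟩ := hc hcm
  simp only at hx
  have hpos : 0 < x := by rw [hx]; positivity
  have hs : Real.sin (1 / x) = 1 := by
    rw [hx, one_div_one_div, Real.sin_add_nat_mul_two_pi, Real.sin_pi_div_two]
  rcases hp with ⟨h1, h2⟩ | ⟨h1, h2⟩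
  · rcases h1 with h1 | h1
    · have h3 : y = Real.sin (1 / x) := h1.2.2
      have h4 : y < 0 := h2
      linarith
    · have h3 : x = 0 := h1.1
      linarith
  · have h3 : 1 / (i : ℝ) < x := h2
    rw [hx] at h3
    have := lt_of_one_div_lt_one_div (by positivity) h3
    nlinarith

/-- For every `i ≥ 1`, the set of connected components of `Vi i` is countably infinite. -/
theorem stmt_9 : ∀ i : ℕ, 1 ≤ i →
    Countable (ConnectedComponents (Vi i)) ∧ Infinite (ConnectedComponents (Vi i)) := by
  intro i hi
  refine ⟨Vi_countable i, ?_⟩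
  refine Infinite.of_injective
    (fun k : ℕ => ConnectedComponents.mk (⟨_, low_mem i (i + k)⟩ : Vi i)) ?_
  intro a b hab
  rcases lt_trichotomy a b with h | h | h
  · exact absurd hab.symm (low_ne i (i + a) (i + b) hi (by omega) (by omega))
  · exact h
  · exact absurd hab (low_ne i (i + b) (i + a) hi (by omega) (by omega))
end

section
/- For every integer i ≥ 2, there exists a subset U of the space V_i that is both open and closed in V_i, with r = (0,-1) ∈ U and s = (1, sin 1) ∉ U. (In particular, r and s lie in different quasi-components of V_i.) -/
open Real Set

/-- For every `i ≥ 2`, there is a clopen subset `U` of `Vi i` containing `r = (0,-1)`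
but not `s = (1, sin 1)`; in particular `r` and `s` lie in different quasi-components. -/
theorem stmt_10 : ∀ i : ℕ, ∀ hi : 2 ≤ i, ∃ U : Set (Vi i),
    IsClopen U ∧ (⟨r, r_mem_Vi i⟩ : Vi i) ∈ U ∧ (⟨s, s_mem_Vi hi⟩ : Vi i) ∉ U := by
  intro i hi
  have hi2 : (2 : ℝ) ≤ i := by exact_mod_cast hi
  have hpi := Real.pi_gt_three
  obtain ⟨d, hd⟩ : ∃ d : ℝ, d = π / 2 + i * (2 * π) := ⟨_, rfl⟩
  have hdi : (i : ℝ) < d := by rw [hd]; nlinarith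
  have hd1 : 1 < d := by linarith
  have hsin : Real.sin d = 1 := by
    rw [hd, Real.sin_add_nat_mul_two_pi, Real.sin_pi_div_two]
  have hcpos : 0 < 1 / d := by positivity
  have hci : 1 / d < 1 / (i : ℝ) := one_div_lt_one_div_of_lt (by linarith) hdi
  have hne : ∀ p : Vi i, p.1.1 ≠ 1 / d := by
    rintro ⟨p, hp⟩ h
    simp only at h
    rcases hp with ⟨hT, hneg⟩ | ⟨_, hgt⟩
    · simp only [mem_ofPred_eq] at hneg
      rcases hT with ⟨_, _, h2⟩ | ⟨h0, _⟩
      · rw [h, one_div_one_div, hsin] at h2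
        linarith
      · linarith
    · simp only [mem_ofPred_eq] at hgt
      linarith
  have hcont : Continuous (fun p : Vi i => p.1.1) := by fun_prop
  refine ⟨{p | p.1.1 < 1 / d}, ⟨?_, isOpen_lt hcont continuous_const⟩, ?_, ?_⟩
  · have : {p : Vi i | p.1.1 < 1 / d} = {p : Vi i | p.1.1 ≤ 1 / d} := by
      ext p
      simp only [mem_ofPred_eq]
      exact ⟨fun h => le_of_lt h, fun h => lt_of_le_of_ne h (hne p)⟩
    rw [this]
    exact isClosed_le hcont continuous_const
  · exact hcpos
  · show ¬ ((1 : ℝ) < 1 / d)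
    rw [not_lt, div_le_one (by linarith)]
    exact hd1.le
end

section
/- Let p be a prime. The inverse system of groups of locally constant functions (LocallyConstant V_n (ZMod p))_{n ≥ 1}, with restriction maps, fails the Mittag-Leffler condition; more precisely: for every i ≥ 1 and every j ≥ i there exists k ≥ j such that the range of the restriction homomorphism LocallyConstant V_k (ZMod p) → LocallyConstant V_i (ZMod p) is strictly contained in the range of the restriction homomorphism LocallyConstant V_j (ZMod p) → LocallyConstant V_i (ZMod p). -/
open Real Set

/-- Restriction of locally constant functions along the inclusion `Vi i ⊆ Vi j`,
as an additive group homomorphism. -/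
noncomputable def resHom (p : ℕ) {i j : ℕ} (h : Vi i ⊆ Vi j) :
    LocallyConstant (Vi j) (ZMod p) →+ LocallyConstant (Vi i) (ZMod p) :=
  LocallyConstant.comapAddMonoidHom ⟨Set.inclusion h, continuous_inclusion h⟩

lemma sin_zero_not_mem {j : ℕ} {t : ℝ} (hj : 1 ≤ j) (ht : (j : ℝ) ≤ t) (h0 : Real.sin t = 0)
    {q : ℝ × ℝ} (hq : q ∈ Vi j) : q.1 ≠ 1 / t := by
  intro h
  have hj' : (0 : ℝ) < j := by exact_mod_cast hj
  have htpos : 0 < t := lt_of_lt_of_le hj' ht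
  have hqpos : 0 < q.1 := by rw [h]; positivity
  rcases hq with ⟨hT, hneg⟩ | ⟨hT, hx⟩
  · rcases hT with ⟨_, _, h2⟩ | ⟨h1, _⟩
    · rw [h, one_div_one_div, h0] at h2
      have : q.2 < 0 := hneg
      linarith
    · linarith
  · have hx' : q.1 > 1 / (j : ℝ) := hx
    have := one_div_le_one_div_of_le hj' ht
    linarith

lemma curve_mem_T {t : ℝ} (ht : 1 ≤ t) : ((1 / t, Real.sin t) : ℝ × ℝ) ∈ T := by
  have h0 : 0 < t := by linarith
  refine Or.inl ⟨by positivity, ?_, ?_⟩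
  · show 1 / t ≤ 1
    rw [div_le_one h0]; exact ht
  · show Real.sin t = Real.sin (1 / (1 / t))
    rw [one_div_one_div]

lemma curve_mem_Vi_of_neg {t : ℝ} (i : ℕ) (ht : 1 ≤ t) (hs : Real.sin t < 0) :
    ((1 / t, Real.sin t) : ℝ × ℝ) ∈ Vi i := Or.inl ⟨curve_mem_T ht, hs⟩

lemma curve_mem_Vi_of_lt {t : ℝ} (k : ℕ) (ht : 1 ≤ t) (hk : t < k) :
    ((1 / t, Real.sin t) : ℝ × ℝ) ∈ Vi k :=
  Or.inr ⟨curve_mem_T ht, one_div_lt_one_div_of_lt (by linarith) hk⟩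

lemma isClopen_strip {j : ℕ} {a b : ℝ} (ha : ∀ q ∈ Vi j, q.1 ≠ a) (hb : ∀ q ∈ Vi j, q.1 ≠ b) :
    IsClopen {q : Vi j | a ≤ q.1.1 ∧ q.1.1 ≤ b} := by
  have hc : Continuous fun q : Vi j => q.1.1 := by fun_prop
  constructor
  · exact (isClosed_le continuous_const hc).inter (isClosed_le hc continuous_const)
  · have : {q : Vi j | a ≤ q.1.1 ∧ q.1.1 ≤ b} = {q : Vi j | a < q.1.1 ∧ q.1.1 < b} := by
      ext q
      exact ⟨fun h => ⟨lt_of_le_of_ne h.1 (ha q q.2).symm, lt_of_le_of_ne h.2 (hb q q.2)⟩,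
        fun h => ⟨h.1.le, h.2.le⟩⟩
    rw [this]
    exact (isOpen_lt continuous_const hc).inter (isOpen_lt hc continuous_const)

lemma const_on_curve {k : ℕ} {Y : Type*} (f : LocallyConstant (Vi k) Y) {u v : ℝ}
    (hu : 1 ≤ u) (huv : u ≤ v) (hv : v < k) :
    f ⟨_, curve_mem_Vi_of_lt k hu (huv.trans_lt hv)⟩ =
      f ⟨_, curve_mem_Vi_of_lt k (hu.trans huv) hv⟩ := by
  let γ : Icc u v → Vi k := fun t =>
    ⟨(1 / t.1, Real.sin t.1), curve_mem_Vi_of_lt k (hu.trans t.2.1) (t.2.2.trans_lt hv)⟩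
  have hγ : Continuous γ := by
    refine Continuous.subtype_mk (Continuous.prodMk ?_ (by fun_prop)) _
    refine continuous_const.div continuous_subtype_val fun t => ?_
    have := t.2.1
    linarith
  have hl : IsLocallyConstant (f ∘ γ) := f.isLocallyConstant.comp_continuous hγ
  haveI : PreconnectedSpace (Icc u v) := Subtype.preconnectedSpace isPreconnected_Icc
  exact hl.apply_eq_of_preconnectedSpace ⟨u, le_rfl, huv⟩ ⟨v, huv, le_rfl⟩

/-- The tower `(LocallyConstant (Vi n) (ZMod p))` with restriction maps fails the
Mittag-Leffler condition: for every `i ≥ 1` and `j ≥ i` there is `k ≥ j` such that the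
range of restriction from level `k` to level `i` is strictly contained in the range of
restriction from level `j` to level `i`. -/
theorem stmt_11 (p : ℕ) (hp : p.Prime) :
    ∀ i : ℕ, ∀ hi : 1 ≤ i, ∀ j : ℕ, ∀ hij : i ≤ j, ∃ k : ℕ, ∃ hjk : j ≤ k,
      Set.range (⇑(resHom p (Vi_mono hi (hij.trans hjk)))) ⊂
        Set.range (⇑(resHom p (Vi_mono hi hij))) := by
  intro i hi j hij
  have hj : 1 ≤ j := hi.trans hij
  have hj' : (1 : ℝ) ≤ j := by exact_mod_cast hj
  have hpi := Real.pi_gt_three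
  obtain ⟨c, hc⟩ : ∃ c : ℝ, c = (j : ℝ) * (2 * π) := ⟨_, rfl⟩
  have hcj : (j : ℝ) ≤ c := by rw [hc]; nlinarith
  have s1 : Real.sin (c + π) = 0 := by
    rw [hc, add_comm, Real.sin_add_nat_mul_two_pi, Real.sin_pi]
  have s2 : Real.sin (c + 2 * π) = 0 := by
    rw [hc, add_comm, Real.sin_add_nat_mul_two_pi, Real.sin_two_pi]
  have s3 : Real.sin (c + 3 * π / 2) = -1 := by
    rw [hc, add_comm, Real.sin_add_nat_mul_two_pi,
      show 3 * π / 2 = π / 2 + π by ring, Real.sin_add_pi, Real.sin_pi_div_two]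
  have s4 : Real.sin (c + 7 * π / 2) = -1 := by
    rw [show c + 7 * π / 2 = c + 3 * π / 2 + 2 * π by ring, Real.sin_add_two_pi, s3]
  obtain ⟨k, hk⟩ := exists_nat_gt (c + 7 * π / 2)
  have hjk : j ≤ k := by
    have : (j : ℝ) ≤ k := by linarith
    exact_mod_cast this
  have hclopen := isClopen_strip (j := j) (a := 1 / (c + 2 * π)) (b := 1 / (c + π))
    (fun q hq => sin_zero_not_mem hj (by linarith) s2 hq)
    (fun q hq => sin_zero_not_mem hj (by linarith) s1 hq)
  haveI : Fact p.Prime := ⟨hp⟩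
  refine ⟨k, hjk, ?_⟩
  rw [Set.ssubset_iff_of_subset]
  · refine ⟨_, ⟨LocallyConstant.charFn (ZMod p) hclopen, rfl⟩, ?_⟩
    rintro ⟨h, hh⟩
    have hconst := const_on_curve h (u := c + 3 * π / 2) (v := c + 7 * π / 2)
      (by linarith) (by linarith) hk
    have m3 := curve_mem_Vi_of_neg (t := c + 3 * π / 2) i (by linarith) (by rw [s3]; norm_num)
    have m4 := curve_mem_Vi_of_neg (t := c + 7 * π / 2) i (by linarith) (by rw [s4]; norm_num)
    have e3 := LocallyConstant.congr_fun hh ⟨_, m3⟩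
    have e4 := LocallyConstant.congr_fun hh ⟨_, m4⟩
    have v3 : LocallyConstant.charFn (ZMod p) hclopen ⟨_, Vi_mono hi hij m3⟩ = 1 := by
      rw [LocallyConstant.charFn_eq_one]
      exact ⟨one_div_le_one_div_of_le (by linarith) (by linarith),
        one_div_le_one_div_of_le (by linarith) (by linarith)⟩
    have v4 : LocallyConstant.charFn (ZMod p) hclopen ⟨_, Vi_mono hi hij m4⟩ = 0 := by
      rw [LocallyConstant.charFn_eq_zero]
      rintro ⟨hle, -⟩
      exact absurd hle (not_le.2 (one_div_lt_one_div_of_lt (by linarith) (by linarith)))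
    have e3' : h ⟨_, Vi_mono hi (hij.trans hjk) m3⟩ = 1 := e3.trans v3
    have e4' : h ⟨_, Vi_mono hi (hij.trans hjk) m4⟩ = 0 := e4.trans v4
    exact one_ne_zero (e3'.symm.trans (hconst.trans e4'))
  · rintro _ ⟨f, rfl⟩
    exact ⟨resHom p (Vi_mono hj hjk) f, rfl⟩
end

section
/- Let (G_n)_{n ∈ ℕ} be a sequence of countable abelian groups together with homomorphisms f_n : G_{n+1} → G_n, and for m ≥ n let f_{m,n} : G_m → G_n denote the composite f_n ∘ f_{n+1} ∘ ⋯ ∘ f_{m-1}. Suppose the tower fails the Mittag-Leffler condition, i.e., there exists i such that for every j ≥ i there exists k ≥ j with the range of f_{k,i} strictly contained in the range of f_{j,i}. Then the homomorphism d : ∏_n G_n → ∏_n G_n defined by d(b)_n = b_n − f_n(b_{n+1}) is not surjective. (Equivalently, the first derived limit lim¹ of the tower is nonzero.) -/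
/-- Let `(G n)` be a tower of countable abelian groups with bonding maps
`f n : G (n+1) →+ G n`, and let `F h : G m →+ G n` (for `h : n ≤ m`) be the composite
`f n ∘ f (n+1) ∘ ⋯ ∘ f (m-1)` (characterized by `hFrefl` and `hFstep`). If the tower fails
the Mittag-Leffler condition, then the map `d : ∏ G n → ∏ G n`,
`d b n = b n - f n (b (n+1))`, is not surjective (i.e. `lim¹` is nonzero). -/
theorem stmt_12 (G : ℕ → Type) [∀ n, AddCommGroup (G n)] [∀ n, Countable (G n)]
    (f : ∀ n : ℕ, G (n + 1) →+ G n)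
    (F : ∀ {m n : ℕ}, n ≤ m → (G m →+ G n))
    (hFrefl : ∀ n : ℕ, F (le_refl n) = AddMonoidHom.id (G n))
    (hFstep : ∀ {m n : ℕ} (h : n ≤ m),
      F (h.trans (Nat.le_succ m)) = (F h).comp (f m))
    (hML : ∃ i : ℕ, ∀ j : ℕ, ∀ hij : i ≤ j, ∃ k : ℕ, ∃ hjk : j ≤ k,
      Set.range (⇑(F (hij.trans hjk))) ⊂ Set.range (⇑(F hij))) :
    ¬ Function.Surjective
      (fun (b : ∀ n : ℕ, G n) (n : ℕ) => b n - f n (b (n + 1))) := by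
  classical
  obtain ⟨i, hi⟩ := hML
  intro hsurj
  have h1 : ∀ j : ℕ, ∃ k : ℕ, ∃ g : G j, j < k ∧
      ∀ (hij : i ≤ j) (hik : i ≤ k) (y : G k), F hik y ≠ F hij g := by
    intro j
    by_cases hij : i ≤ j
    · obtain ⟨k, hjk, hss⟩ := hi j hij
      obtain ⟨_, ⟨g, rfl⟩, hg⟩ := Set.exists_of_ssubset hss
      refine ⟨k, g, ?_, ?_⟩
      · rcases hjk.lt_or_eq with h | h
        · exact h
        · subst h
          exact absurd ⟨g, rfl⟩ hg
      · intro _ hik y hy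
        exact hg ⟨y, hy⟩
    · exact ⟨j + 1, 0, Nat.lt_succ_self j, fun h => absurd h hij⟩
  choose κ g hκ hg using h1
  let m : ℕ → ℕ := fun k => κ^[k] i
  have hmS : ∀ k, m (k + 1) = κ (m k) := fun k => Function.iterate_succ_apply' κ k i
  have hm : StrictMono m := strictMono_nat_of_lt_succ fun k => by
    rw [hmS]; exact hκ _
  have him : ∀ k, i ≤ m k := fun k => hm.monotone (Nat.zero_le k)
  let a : Set ℕ → ∀ n, G n := fun T n => if n ∈ Set.image m T then g n else 0
  choose B hB using fun T => hsurj (a T)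
  have hni : ¬ Function.Injective (fun T : Set ℕ => B T i) := by
    intro hinj
    have : Countable (Set ℕ) := hinj.countable
    obtain ⟨e, he⟩ := exists_surjective_nat (Set ℕ)
    exact Function.cantor_surjective e he
  simp only [Function.Injective, not_forall] at hni
  obtain ⟨T, T', hTT, hne⟩ := hni
  have hex : ∃ k, ¬ (k ∈ T ↔ k ∈ T') := by
    by_contra hcon
    push Not at hcon
    exact hne (Set.ext hcon)
  let K := Nat.find hex
  have hK : ¬ (K ∈ T ↔ K ∈ T') := Nat.find_spec hex
  have hKmin : ∀ k < K, (k ∈ T ↔ k ∈ T') := fun k hk => not_not.1 (Nat.find_min hex hk)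
  have hmem : ∀ (S : Set ℕ) k, m k ∈ Set.image m S ↔ k ∈ S := fun S k =>
    hm.injective.mem_set_image
  let c : ∀ n, G n := fun n => B T n - B T' n
  have hc : ∀ n, c n = (a T n - a T' n) + f n (c (n + 1)) := by
    intro n
    have e1 := congrFun (hB T) n
    have e2 := congrFun (hB T') n
    simp only at e1 e2
    simp only [c, map_sub, ← e1, ← e2]
    abel
  have hstep : ∀ n (h : i ≤ n), F h (c n) =
      F h (a T n - a T' n) + F (h.trans (Nat.le_succ n)) (c (n + 1)) := by
    intro n h
    rw [hFstep h, AddMonoidHom.comp_apply, ← map_add, ← hc]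
  have hzero : ∀ n, n < m (K + 1) → n ≠ m K → a T n - a T' n = 0 := by
    intro n hn hnK
    have : n ∈ Set.image m T ↔ n ∈ Set.image m T' := by
      by_cases hr : ∃ k, m k = n
      · obtain ⟨k, rfl⟩ := hr
        rw [hmem, hmem]
        have h1 := hm.lt_iff_lt.1 hn
        have h2 : k ≠ K := fun h => hnK (by rw [h])
        exact hKmin k (by omega)
      · constructor
        · rintro ⟨k, _, hk⟩; exact absurd ⟨k, hk⟩ hr
        · rintro ⟨k, _, hk⟩; exact absurd ⟨k, hk⟩ hr
    simp only [a, this, sub_self]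
  have hlt : m K < m (K + 1) := hm (Nat.lt_succ_self K)
  have hlow : ∀ n (h : i ≤ n), n ≤ m K → F h (c n) = 0 := by
    intro n h
    induction n, h using Nat.le_induction with
    | base => intro _; simp only [hFrefl]; exact sub_eq_zero.2 hTT
    | succ n h ih =>
      intro hn
      have := hstep n h
      rw [ih (by omega), hzero n (by omega) (by omega), map_zero, zero_add] at this
      exact this.symm
  have hhigh : ∀ n (_ : m K + 1 ≤ n) (h : i ≤ n), n ≤ m (K + 1) →
      F h (c n) = - F (him K) (a T (m K) - a T' (m K)) := by
    intro n h0
    induction n, h0 using Nat.le_induction with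
    | base =>
      intro h _
      have := hstep (m K) (him K)
      rw [hlow _ (him K) le_rfl] at this
      exact (neg_eq_of_add_eq_zero_right this.symm).symm
    | succ n h0 ih =>
      intro h hn
      have hin : i ≤ n := (him K).trans (by omega)
      have := hstep n hin
      rw [ih hin (by omega), hzero n (by omega) (by omega), map_zero, zero_add] at this
      exact this.symm
  have hfin : ∃ y : G (m (K + 1)), F (him (K + 1)) y = F (him K) (g (m K)) := by
    have h2 := hhigh (m (K + 1)) hlt (him _) le_rfl
    by_cases hT : K ∈ T
    · have hT' : K ∉ T' := fun h => hK ⟨fun _ => h, fun _ => hT⟩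
      refine ⟨- c (m (K + 1)), ?_⟩
      rw [map_neg, h2]
      simp only [a, hmem, hT, hT', if_true, if_false, sub_zero, neg_neg]
    · have hT' : K ∈ T' := by
        by_contra h
        exact hK ⟨fun h' => absurd h' hT, fun h' => absurd h' h⟩
      refine ⟨c (m (K + 1)), ?_⟩
      rw [h2]
      simp only [a, hmem, hT, hT', if_true, if_false, zero_sub, map_neg, neg_neg]
  have hgen : ∀ N, N = κ (m K) → ∀ (hN : i ≤ N) (y : G N),
      F hN y ≠ F (him K) (g (m K)) := by
    rintro N rfl hN y
    exact hg (m K) (him K) hN y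
  obtain ⟨y, hy⟩ := hfin
  exact hgen _ (hmS K) _ y hy
end

section
/- Let p be a prime. The additive map d : ∏_{n ≥ 1} LocallyConstant V_n (ZMod p) → ∏_{n ≥ 1} LocallyConstant V_n (ZMod p) defined by d(b)_n = b_n − (restriction of b_{n+1} to V_n) is not surjective. (Equivalently, lim¹ of the tower (LocallyConstant V_n (ZMod p)) with restriction maps is nonzero.) -/
open Real Set

/-- abscissa of the `j`-th minimum -/
noncomputable def xx (j : ℕ) : ℝ := 1 / (2 * π * j + 3 * π / 2)

lemma den_pos (j : ℕ) : 0 < 2 * π * j + 3 * π / 2 := by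
  have := Real.pi_pos
  positivity

lemma xx_pos (j : ℕ) : 0 < xx j := one_div_pos.2 (den_pos j)

lemma xx_le_one (j : ℕ) : xx j ≤ 1 := by
  unfold xx
  rw [div_le_one (den_pos j)]
  have := Real.pi_gt_three
  have : (0 : ℝ) ≤ 2 * π * j := by positivity
  linarith

lemma sin_xx (j : ℕ) : Real.sin (1 / xx j) = -1 := by
  unfold xx
  rw [one_div_one_div,
    show 2 * π * j + 3 * π / 2 = (-(π / 2)) + ((j + 1 : ℕ) : ℝ) * (2 * π) by push_cast; ring,
    Real.sin_add_nat_mul_two_pi, Real.sin_neg, Real.sin_pi_div_two]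

lemma P_mem (j n : ℕ) : ((xx j, -1) : ℝ × ℝ) ∈ Vi n :=
  Or.inl ⟨Or.inl ⟨xx_pos j, xx_le_one j, (sin_xx j).symm⟩, by norm_num⟩

/-- the `j`-th minimum -/
noncomputable def PP (n j : ℕ) : Vi n := ⟨(xx j, -1), P_mem j n⟩

lemma xx_anti (j : ℕ) : xx (j + 1) ≤ xx j := by
  unfold xx
  apply one_div_le_one_div_of_le (den_pos j)
  have := Real.pi_pos
  push_cast
  nlinarith

lemma xx_tendsto : Filter.Tendsto xx Filter.atTop (nhds 0) := by
  unfold xx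
  simp only [one_div]
  apply Filter.Tendsto.inv_tendsto_atTop
  apply Filter.tendsto_atTop_add_const_right
  exact Filter.Tendsto.const_mul_atTop (by have := Real.pi_pos; positivity)
    tendsto_natCast_atTop_atTop

lemma PP_tendsto (n : ℕ) :
    Filter.Tendsto (PP n) Filter.atTop (nhds (⟨r, r_mem_Vi n⟩ : Vi n)) := by
  rw [tendsto_subtype_rng]
  exact xx_tendsto.prodMk_nhds tendsto_const_nhds

lemma ev_const {n : ℕ} {Y : Type*} (f : LocallyConstant (Vi n) Y) :
    ∃ j, f (PP n (j + 1)) = f (PP n j) := by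
  have h := (PP_tendsto n).eventually (f.isLocallyConstant.eventually_eq ⟨r, r_mem_Vi n⟩)
  obtain ⟨N, hN⟩ := Filter.eventually_atTop.1 h
  exact ⟨N, (hN (N + 1) (by omega)).trans (hN N le_rfl).symm⟩

lemma const_of_lt {n : ℕ} {Y : Type*} (f : LocallyConstant (Vi n) Y) (j : ℕ)
    (h : 1 / (n : ℝ) < xx (j + 1)) : f (PP n (j + 1)) = f (PP n j) := by
  have hmem : ∀ t : Icc (xx (j + 1)) (xx j), ((t.1, Real.sin (1 / t.1)) : ℝ × ℝ) ∈ Vi n := by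
    rintro ⟨t, h1, h2⟩
    exact Or.inr ⟨Or.inl ⟨(xx_pos _).trans_le h1, h2.trans (xx_le_one j), rfl⟩, h.trans_le h1⟩
  let φ : Icc (xx (j + 1)) (xx j) → Vi n := fun t => ⟨_, hmem t⟩
  have hφ : Continuous φ := by
    apply Continuous.subtype_mk
    refine continuous_subtype_val.prodMk (Real.continuous_sin.comp ?_)
    exact continuous_const.div continuous_subtype_val
      (fun t => ((xx_pos _).trans_le t.2.1).ne')
  have hl := f.isLocallyConstant.comp_continuous hφ
  have : PreconnectedSpace (Icc (xx (j + 1)) (xx j)) :=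
    isPreconnected_iff_preconnectedSpace.1 isPreconnected_Icc
  have := hl.apply_eq_of_preconnectedSpace
    ⟨xx (j + 1), le_rfl, xx_anti j⟩ ⟨xx j, xx_anti j, le_rfl⟩
  have e1 : φ ⟨xx (j + 1), le_rfl, xx_anti j⟩ = PP n (j + 1) :=
    Subtype.ext (Prod.ext rfl (sin_xx _))
  have e2 : φ ⟨xx j, xx_anti j, le_rfl⟩ = PP n j :=
    Subtype.ext (Prod.ext rfl (sin_xx _))
  simp only [Function.comp, e1, e2] at this
  exact this

/-- cut abscissa -/
noncomputable def cc (m : ℕ) : ℝ := 1 / (2 * π * (m + 1))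

lemma cc_pos (m : ℕ) : 0 < cc m := by
  have := Real.pi_pos
  unfold cc
  positivity

lemma cut_ne (m : ℕ) (z : Vi (m + 1)) : z.1.1 ≠ cc m := by
  intro hz
  have hs : Real.sin (1 / cc m) = 0 := by
    unfold cc
    rw [one_div_one_div, show 2 * π * (m + 1) = ((2 * (m + 1) : ℕ) : ℝ) * π by push_cast; ring]
    exact Real.sin_nat_mul_pi _
  obtain ⟨z, hV⟩ := z
  simp only at hz
  rcases hV with ⟨hT, hy⟩ | ⟨-, hx⟩
  · have hy' : z.2 < 0 := hy
    rcases hT with ⟨-, -, h⟩ | ⟨h, -⟩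
    · rw [hz, hs] at h
      linarith
    · have := cc_pos m
      linarith
  · have hx' : 1 / ((m + 1 : ℕ) : ℝ) < z.1 := hx
    have hpi := Real.pi_gt_three
    have : cc m ≤ 1 / ((m + 1 : ℕ) : ℝ) := by
      unfold cc
      apply one_div_le_one_div_of_le (by positivity)
      push_cast
      nlinarith [(Nat.cast_nonneg m : (0 : ℝ) ≤ m)]
    linarith

lemma cut_clopen (m : ℕ) : IsClopen {z : Vi (m + 1) | z.1.1 < cc m} := by
  have hc : Continuous fun z : Vi (m + 1) => z.1.1 := continuous_fst.comp continuous_subtype_val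
  refine ⟨?_, isOpen_lt hc continuous_const⟩
  have : {z : Vi (m + 1) | z.1.1 < cc m} = {z : Vi (m + 1) | z.1.1 ≤ cc m} := by
    ext z
    simp only [Set.mem_ofPred_eq]
    exact ⟨fun h => le_of_lt h, fun h => lt_of_le_of_ne h (cut_ne m z)⟩
  rw [this]
  exact isClosed_le hc continuous_const

lemma PP_cut (m j : ℕ) : (PP (m + 1) j).1.1 < cc m ↔ m < j := by
  change xx j < cc m ↔ _
  have hpi := Real.pi_pos
  unfold xx cc
  rw [one_div_lt_one_div (den_pos j) (by positivity)]
  constructor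
  · intro h
    by_contra hn
    have : (j : ℝ) ≤ m := by exact_mod_cast not_lt.1 hn
    nlinarith
  · intro h
    have : (m : ℝ) + 1 ≤ j := by exact_mod_cast h
    nlinarith

/-- For a prime `p`, the map `d` on `∏_{n ≥ 1} LocallyConstant (Vi n) (ZMod p)` given by
`d b n = b n - (restriction of b (n+1))` is not surjective: `lim¹` of the tower of groups
of locally constant functions is nonzero. -/
theorem stmt_13 (p : ℕ) (hp : p.Prime) :
    ¬ Function.Surjective
      (fun (b : ∀ n : ℕ, LocallyConstant (Vi (n + 1)) (ZMod p)) (n : ℕ) =>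
        b n - resHom p (Vi_mono (Nat.le_add_left 1 n) (Nat.le_succ (n + 1))) (b (n + 1))) := by
  intro hsurj
  have := Fact.mk hp
  obtain ⟨b, hb⟩ := hsurj fun m => LocallyConstant.charFn (ZMod p) (cut_clopen m)
  have key : ∀ m j, b m (PP (m + 1) j) - b (m + 1) (PP (m + 1 + 1) j)
      = if m < j then 1 else 0 := by
    intro m j
    have h := DFunLike.congr_fun (congrFun hb m) (PP (m + 1) j)
    rw [LocallyConstant.coe_charFn, Set.indicator_apply] at h
    simp only [Set.mem_ofPred_eq, PP_cut, Pi.one_apply] at h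
    exact h
  obtain ⟨j, hj⟩ := ev_const (b 0)
  have ind : ∀ n, b n (PP (n + 1) (j + 1)) - b n (PP (n + 1) j)
      = if j < n then -1 else 0 := by
    intro n
    induction n with
    | zero => simpa using sub_eq_zero.2 hj
    | succ n ih =>
      have h1 := key n (j + 1)
      have h2 := key n j
      have h3 : b (n + 1) (PP (n + 1 + 1) (j + 1)) - b (n + 1) (PP (n + 1 + 1) j)
        = (b n (PP (n + 1) (j + 1)) - b n (PP (n + 1) j))
          - (b n (PP (n + 1) (j + 1)) - b (n + 1) (PP (n + 1 + 1) (j + 1)))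
          + (b n (PP (n + 1) j) - b (n + 1) (PP (n + 1 + 1) j)) := by ring
      rw [h3, ih, h1, h2]
      rcases lt_trichotomy n j with h | h | h
      · simp [show ¬ j < n by omega, show n < j + 1 by omega, h, show ¬ j < n + 1 by omega]
      · subst h
        simp
      · simp [h, show ¬ n < j + 1 by omega, show ¬ n < j by omega, show j < n + 1 by omega]
  obtain ⟨N, hN⟩ := exists_nat_one_div_lt (xx_pos (j + 1))
  have hlt : 1 / (((max N (j + 1)) + 1 : ℕ) : ℝ) < xx (j + 1) := by
    refine lt_of_le_of_lt (one_div_le_one_div_of_le (by positivity) ?_) hN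
    push_cast
    gcongr
    exact le_max_left _ _
  have h := ind (max N (j + 1))
  rw [const_of_lt _ j hlt, sub_self, if_pos (by omega)] at h
  exact one_ne_zero (neg_eq_zero.1 h.symm)
end

section
/- Let p be a prime. There exists a sequence (a_n)_{n ≥ 2} with a_n ∈ LocallyConstant (V_n × V_n) (ZMod p) such that there is NO sequence (b_n)_{n ≥ 2} with b_n ∈ LocallyConstant V_n (ZMod p) satisfying a_n(x, r) − a_n(x, s) = b_n(x) − b_{n+1}(x) for all n ≥ 2 and all x ∈ V_n. (This is the concrete content of the theorem that the embeddings F_r, F_s : V_n ↪ V_n × V_n at parameters r and s induce different maps on the lim¹ term of first Čech/Alexander–Spanier cohomology of T × T, so the homotopy axiom fails with the locally compact connected parameter space T in place of [0,1].) -/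
open Real Set

/-- The cut abscissa `1/(jπ)`. -/
noncomputable def cut (j : ℕ) : ℝ := 1 / ((j : ℝ) * π)

lemma cut_not_mem (N j : ℕ) (hN : 1 ≤ N) (hj : N ≤ j) (x : ℝ × ℝ) (hx : x ∈ Vi N) :
    x.1 ≠ cut j := by
  intro h
  have hN' : (1 : ℝ) ≤ N := by exact_mod_cast hN
  have hj' : (N : ℝ) ≤ j := by exact_mod_cast hj
  have hpi := Real.pi_gt_three
  have hj0 : (0 : ℝ) < j := by linarith
  have hpos : 0 < cut j := by unfold cut; positivity
  rcases hx with ⟨hT, hy⟩ | ⟨hT, hy⟩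
  · rcases hT with ⟨h0, h1, h2⟩ | ⟨h0, h1⟩
    · have : x.2 = 0 := by
        rw [h2, h, cut, one_div_one_div, Real.sin_nat_mul_pi]
      have hy' : x.2 < 0 := hy
      linarith
    · linarith
  · have hy' : 1 / (N : ℝ) < x.1 := hy
    rw [h, cut] at hy'
    have := (one_div_lt_one_div (by linarith) (by positivity)).1 hy'
    nlinarith

lemma cut_clopen_s16 (N j : ℕ) (hN : 1 ≤ N) (hj : N ≤ j) :
    IsClopen {x : Vi N | x.1.1 < cut j} := by
  constructor
  · have : {x : Vi N | x.1.1 < cut j} = {x : Vi N | x.1.1 ≤ cut j} := by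
      ext x
      have hne := cut_not_mem N j hN hj x.1 x.2
      change x.1.1 < cut j ↔ x.1.1 ≤ cut j
      exact ⟨fun h => le_of_lt h, fun h => lt_of_le_of_ne h hne⟩
    rw [this]
    exact isClosed_le (by fun_prop) continuous_const
  · exact isOpen_lt (by fun_prop) continuous_const

/-- The clopen set whose indicator is `a n`. -/
def U (N : ℕ) : Set (Vi N × Vi N) :=
  {z | (¬ z.1.1.1 < cut (4 * N)) ∧ z.1.1.1 < cut (4 * N - 1) ∧ z.2.1.1 < cut (4 * N - 1)}

lemma U_clopen (N : ℕ) (hN : 1 ≤ N) : IsClopen (U N) := by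
  have h1 := cut_clopen_s16 N (4 * N) hN (by omega)
  have h2 := cut_clopen_s16 N (4 * N - 1) hN (by omega)
  exact (h1.compl.preimage continuous_fst).inter
    ((h2.preimage continuous_fst).inter (h2.preimage continuous_snd))

/-- Bottom points of the arcs. -/
noncomputable def q (k : ℕ) : ℝ × ℝ := (1 / ((2 * (k : ℝ) + 2 - 1 / 2) * π), -1)

lemma q_mem_V (k : ℕ) : q k ∈ V := by
  have hk : (0 : ℝ) ≤ k := Nat.cast_nonneg k
  have hpi := Real.pi_gt_three
  refine ⟨Or.inl ⟨?_, ?_, ?_⟩, ?_⟩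
  · have : 0 < 2 * (k : ℝ) + 2 - 1 / 2 := by linarith
    simp only [q]; positivity
  · simp only [q]
    rw [div_le_one (by nlinarith)]
    nlinarith
  · simp only [q]
    rw [one_div_one_div]
    have : (2 * (k : ℝ) + 2 - 1 / 2) * π = -(π / 2) + ((k + 1 : ℕ) : ℝ) * (2 * π) := by
      push_cast; ring
    rw [this, Real.sin_add_nat_mul_two_pi, Real.sin_neg, Real.sin_pi_div_two]
  · show (-1 : ℝ) < 0
    norm_num

lemma q_lt_cut (k j : ℕ) (hj : 1 ≤ j) : (q k).1 < cut j ↔ j < 2 * k + 2 := by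
  have hk : (0 : ℝ) ≤ k := Nat.cast_nonneg k
  have hj' : (1 : ℝ) ≤ j := by exact_mod_cast hj
  have hpi := Real.pi_pos
  simp only [q, cut]
  rw [one_div_lt_one_div (mul_pos (by linarith) hpi) (by positivity),
    mul_lt_mul_iff_left₀ hpi]
  constructor
  · intro h
    have : (j : ℝ) < ((2 * k + 2 : ℕ) : ℝ) := by push_cast; linarith
    exact_mod_cast this
  · intro h
    have : (j : ℝ) + 1 ≤ ((2 * k + 2 : ℕ) : ℝ) := by exact_mod_cast h
    push_cast at this
    linarith

lemma s_not_lt_cut (j : ℕ) (hj : 1 ≤ j) : ¬ s.1 < cut j := by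
  have hj' : (1 : ℝ) ≤ j := by exact_mod_cast hj
  have hpi := Real.pi_gt_three
  simp only [s, cut, not_lt]
  rw [div_le_one (by positivity)]
  nlinarith

lemma r_lt_cut (j : ℕ) (hj : 1 ≤ j) : r.1 < cut j := by
  have hj' : (1 : ℝ) ≤ j := by exact_mod_cast hj
  have hpi := Real.pi_gt_three
  simp only [r, cut]
  positivity

lemma q_tendsto : Filter.Tendsto q Filter.atTop (nhds r) := by
  have h : Filter.Tendsto (fun k : ℕ => (1 : ℝ) / ((2 * (k : ℝ) + 2 - 1 / 2) * π))
      Filter.atTop (nhds 0) := by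
    have h1 : Filter.Tendsto (fun k : ℕ => ((2 * (k : ℝ) + 2 - 1 / 2) * π))
        Filter.atTop Filter.atTop := by
      refine Filter.tendsto_atTop_mono (fun k => ?_) tendsto_natCast_atTop_atTop
      have hk : (0 : ℝ) ≤ k := Nat.cast_nonneg k
      have hpi := Real.pi_gt_three
      nlinarith
    simp only [one_div (_ * _)]
    exact h1.inv_tendsto_atTop
  exact h.prodMk_nhds tendsto_const_nhds

lemma eq_s (N : ℕ) (hN : 2 ≤ N) {α : Type*} (b : LocallyConstant (Vi N) α) (x : ℝ × ℝ)
    (hxV : x ∈ Vi N) (hT : x ∈ T) (hx : 1 / (N : ℝ) < x.1) :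
    b ⟨x, hxV⟩ = b ⟨s, s_mem_Vi hN⟩ := by
  have hN' : (2 : ℝ) ≤ N := by exact_mod_cast hN
  have h0 : (0 : ℝ) < 1 / (N : ℝ) := by positivity
  have key : ∀ t : Set.Ioc (1 / (N : ℝ)) 1, ((t : ℝ), Real.sin (1 / (t : ℝ))) ∈ Vi N :=
    fun t => Or.inr ⟨Or.inl ⟨h0.trans t.2.1, t.2.2, rfl⟩, t.2.1⟩
  let f : Set.Ioc (1 / (N : ℝ)) 1 → Vi N := fun t => ⟨_, key t⟩
  have hf : Continuous f := by
    refine Continuous.subtype_mk ?_ _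
    refine continuous_subtype_val.prodMk (Real.continuous_sin.comp ?_)
    exact continuous_const.div continuous_subtype_val (fun t => (h0.trans t.2.1).ne')
  have : PreconnectedSpace (Set.Ioc (1 / (N : ℝ)) 1) :=
    Subtype.preconnectedSpace isPreconnected_Ioc
  have hlc : IsLocallyConstant (b ∘ f) := b.isLocallyConstant.comp_continuous hf
  rcases hT with ⟨h1, h2, h3⟩ | ⟨h1, _⟩
  · have e := hlc.apply_eq_of_preconnectedSpace ⟨x.1, hx, h2⟩
      ⟨1, by rw [div_lt_one (by linarith)]; linarith, le_refl _⟩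
    have e1 : f ⟨x.1, hx, h2⟩ = ⟨x, hxV⟩ := Subtype.ext (Prod.ext rfl h3.symm)
    have e2 : f ⟨1, by rw [div_lt_one (by linarith)]; linarith, le_refl _⟩
        = ⟨s, s_mem_Vi hN⟩ := Subtype.ext (Prod.ext rfl (by simp [f, s]))
    simp only [Function.comp_apply, e1, e2] at e
    exact e
  · linarith

theorem stmt_16 (p : ℕ) (hp : p.Prime) :
    ∃ a : ∀ n : ℕ, LocallyConstant (↥(Vi (n + 2)) × ↥(Vi (n + 2))) (ZMod p),
      ¬ ∃ b : ∀ n : ℕ, LocallyConstant (Vi (n + 2)) (ZMod p),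
        ∀ (n : ℕ) (x : Vi (n + 2)),
          a n (x, ⟨r, r_mem_Vi (n + 2)⟩) - a n (x, ⟨s, s_mem_Vi (by omega)⟩) =
            b n x - b (n + 1) (Set.inclusion (Vi_mono (by omega) (by omega)) x) := by
  classical
  have := Fact.mk hp
  refine ⟨fun n => LocallyConstant.charFn (ZMod p) (U_clopen (n + 2) (by omega)), ?_⟩
  rintro ⟨b, hb⟩
  have hbr : ∀ n (x : Vi (n + 2)),
      b n x = (if (¬ x.1.1 < cut (4 * (n + 2))) ∧ x.1.1 < cut (4 * (n + 2) - 1) then 1 else 0)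
        + b (n + 1) (Set.inclusion (Vi_mono (by omega) (by omega)) x) := by
    intro n x
    have h := hb n x
    have h1 := r_lt_cut (4 * (n + 2) - 1) (by omega)
    have h2 := s_not_lt_cut (4 * (n + 2) - 1) (by omega)
    simp only [LocallyConstant.coe_charFn, Set.indicator_apply, U, Set.mem_ofPred_eq, h1, h2,
      and_true, and_false, if_false, sub_zero, Pi.one_apply] at h
    rw [h]; ring
  have tel : ∀ m (x : ℝ × ℝ) (h : x ∈ Vi (0 + 2)), b 0 ⟨x, h⟩ =
      (∑ i ∈ Finset.range m,
        (if (¬ x.1 < cut (4 * (i + 2))) ∧ x.1 < cut (4 * (i + 2) - 1) then (1 : ZMod p) else 0))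
        + b m ⟨x, Vi_mono (by omega) (by omega) h⟩ := by
    intro m
    induction m with
    | zero => intro x h; simp
    | succ m ih =>
      intro x h
      rw [ih x h, Finset.sum_range_succ]
      have e := hbr m ⟨x, Vi_mono (by omega) (by omega) h⟩
      exact (congrArg _ e).trans (add_assoc _ _ _).symm
  have hs : ∀ m, b 0 ⟨s, s_mem_Vi (by omega)⟩ = b m ⟨s, s_mem_Vi (by omega)⟩ := by
    intro m
    rw [tel m s (s_mem_Vi (by omega)), Finset.sum_eq_zero, zero_add]
    intro i _
    rw [if_neg]
    exact fun h => s_not_lt_cut _ (by omega) h.2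
  have hq : ∀ k, b 0 ⟨q k, Or.inl (q_mem_V k)⟩ = b 0 ⟨s, s_mem_Vi (by omega)⟩
      + if (∃ i, k + 1 = 2 * (i + 2)) then 1 else 0 := by
    intro k
    obtain ⟨m, hm⟩ := exists_nat_gt (1 / (q k).1)
    have hpos : 0 < (q k).1 := by
      rcases (q_mem_V k).1 with h | h
      · exact h.1
      · have hk : (0 : ℝ) ≤ k := Nat.cast_nonneg k
        have : 0 < 2 * (k : ℝ) + 2 - 1 / 2 := by linarith
        simp only [q]; positivity
    have hM : 1 / (((m + k) + 2 : ℕ) : ℝ) < (q k).1 := by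
      rw [one_div_lt (by positivity) hpos]
      refine hm.trans_le ?_
      exact_mod_cast (by omega : m ≤ m + k + 2)
    rw [tel (m + k) (q k) (Or.inl (q_mem_V k)), hs (m + k), add_comm,
      eq_s (m + k + 2) (by omega) (b (m + k)) (q k) _ (q_mem_V k).1 hM]
    congr 1
    have hc : ∀ i, ((¬ (q k).1 < cut (4 * (i + 2))) ∧ (q k).1 < cut (4 * (i + 2) - 1)) ↔
        k + 1 = 2 * (i + 2) := by
      intro i
      rw [q_lt_cut _ _ (by omega), q_lt_cut _ _ (by omega)]
      omega
    simp only [hc]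
    split_ifs with h
    · obtain ⟨i, hi⟩ := h
      rw [Finset.sum_eq_single i]
      · rw [if_pos hi]
      · intro j _ hj
        rw [if_neg]; omega
      · intro h
        exact absurd (Finset.mem_range.2 (by omega)) h
    · refine Finset.sum_eq_zero fun i _ => ?_
      rw [if_neg (fun h' => h ⟨i, h'⟩)]
  have ht : Filter.Tendsto (fun k => (⟨q k, Or.inl (q_mem_V k)⟩ : Vi (0 + 2))) Filter.atTop
      (nhds ⟨r, r_mem_Vi (0 + 2)⟩) := tendsto_subtype_rng.2 q_tendsto
  have hev := ht.eventually ((b 0).isLocallyConstant.eventually_eq ⟨r, r_mem_Vi (0 + 2)⟩)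
  obtain ⟨K, hK⟩ := Filter.eventually_atTop.1 hev
  have e1 : b 0 _ = b 0 _ := hK (2 * K + 3) (by omega)
  have e2 : b 0 _ = b 0 _ := hK (2 * K + 4) (by omega)
  rw [hq, if_pos ⟨K, by omega⟩] at e1
  rw [hq, if_neg (by rintro ⟨i, hi⟩; omega)] at e2
  have := e1.trans e2.symm
  simp at this
end
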